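/- arXiv:2410.20460 — 2 statements merged into one kernel-verified Lean document; each statement's English description precedes it below -/
import Mathlib

section
/- If a and b are distinct positive integers and w is a word over the positive integers, then the composition recording the multiplicities of b in each row of the RSK insertion tableau P(wa) is dominated by the corresponding composition for P(w), which in turn is dominated by that of P(aw). Here a composition α is dominated by β if every partial sum α_1+...+α_i is at most β_1+...+β_i. -/
namespace Plactic

/-- Insert `x` into a weakly increasing row, returning the new row and the bumped entry. -/
def rowInsert (x : ℕ) : List ℕ → List ℕ × Option ℕ
  | [] => ([x], none)
  | y :: ys =>
    if x < y then (x :: ys, some y)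
    else
      let p := rowInsert x ys
      (y :: p.1, p.2)

/-- RSK insertion of `x` into a tableau given as a list of rows. -/
def tInsert (x : ℕ) : List (List ℕ) → List (List ℕ)
  | [] => [[x]]
  | r :: rs =>
    match rowInsert x r with
    | (r', none) => r' :: rs
    | (r', some y) => r' :: tInsert y rs

/-- The RSK insertion tableau of a word. -/
def P (w : List ℕ) : List (List ℕ) := w.foldl (fun t x => tInsert x t) []

/-- The `i`-th row (0-indexed) of the insertion tableau of `w`. -/
def row (w : List ℕ) (i : ℕ) : List ℕ := (P w).getD i []

/-- The `j`-th column (0-indexed) of a tableau, read top to bottom. -/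
def col (T : List (List ℕ)) (j : ℕ) : List ℕ := T.filterMap (fun r => r[j]?)

/-- An elementary Knuth transposition. -/
inductive KStep : List ℕ → List ℕ → Prop
  | k1 (x y : List ℕ) (a b c : ℕ) : a ≤ b → b < c →
      KStep (x ++ [a, c, b] ++ y) (x ++ [c, a, b] ++ y)
  | k2 (x y : List ℕ) (a b c : ℕ) : a < b → b ≤ c →
      KStep (x ++ [b, a, c] ++ y) (x ++ [b, c, a] ++ y)

/-- Knuth equivalence: the equivalence relation generated by Knuth transpositions. -/
def KEquiv : List ℕ → List ℕ → Prop := Relation.EqvGen KStep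

/-- The centralizer of `u` in the plactic monoid. -/
def Cent (u : List ℕ) : Set (List ℕ) := {w | KEquiv (u ++ w) (w ++ u)}

end Plactic

namespace Plactic

/-- The number of entries of the row `r` that are smaller than `v`. -/
def countLt (r : List ℕ) (v : ℕ) : ℕ := r.countP (fun x => decide (x < v))

/-- The cumulative counting functions of the rows of a tableau. -/
def rowCounts (T : List (List ℕ)) (i v : ℕ) : ℕ := countLt (T.getD i []) v

/-- Inserting `x` into a row with cumulative counting function `F` bumps `z` and yields a row with
cumulative counting function `G`. Entries are smaller than `M`, and `M` stands for no entry. -/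
structure Bumps (M x z : ℕ) (F G : ℕ → ℕ) : Prop where
  lt_or : x < z ∨ (x = M ∧ z = M)
  le : z ≤ M
  gap : x < M → F z = F (x + 1)
  mem : z < M → F z < F (z + 1)
  count : ∀ v ≤ M, G v + (if z < v then 1 else 0) = F v + (if x < v then 1 else 0)

/-- `X` is the sequence of entries inserted into the successive rows when the insertion of `X 0`
transforms a tableau with row counts `T` into one with row counts `S`. -/
def BumpSeq (M : ℕ) (X : ℕ → ℕ) (T S : ℕ → ℕ → ℕ) : Prop :=
  ∀ i, Bumps M (X i) (X (i + 1)) (T i) (S i)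

/-- Column strictness below `M`, together with monotonicity of the counting functions. -/
structure ColStrict (M : ℕ) (T : ℕ → ℕ → ℕ) : Prop where
  mono : ∀ i, Monotone (T i)
  strict : ∀ i, ∀ v < M, T (i + 1) (v + 1) ≤ T i v

/-- `T'` arises from `T` by a column insertion in which `C i` moves from row `i` to row `i - 1`,
the value `M` meaning that nothing moves. -/
structure ColBump (M : ℕ) (C : ℕ → ℕ) (T T' : ℕ → ℕ → ℕ) : Prop where
  zero : C 0 = M
  anti : ∀ i, C (i + 1) ≤ C i
  count : ∀ i, ∀ v ≤ M,
    T' i v + (if C i < v then 1 else 0) = T i v + (if C (i + 1) < v then 1 else 0)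
  tight : ∀ i, C (i + 1) < M → T (i + 1) (C (i + 1) + 1) = T i (C (i + 1))

lemma ColBump.le {M : ℕ} {C : ℕ → ℕ} {T T' : ℕ → ℕ → ℕ} (h : ColBump M C T T') (i : ℕ) :
    C i ≤ M := by
  induction i with
  | zero => exact h.zero.le
  | succ i ih => exact (h.anti i).trans ih

lemma ColStrict.bumpSeq {M : ℕ} {X : ℕ → ℕ} {T S : ℕ → ℕ → ℕ} (hT : ColStrict M T)
    (hX : BumpSeq M X T S) (hS : ∀ i, Monotone (S i)) : ColStrict M S := by
  refine ⟨hS, fun i v hv => ?_⟩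
  have h0 := hX i
  have h1 := hX (i + 1)
  have e0 := h0.count v (by omega)
  have e1 := h1.count (v + 1) (by omega)
  have s := hT.strict i v hv
  have l0 := h0.lt_or
  have l1 := h1.lt_or
  by_cases hz : X (i + 1) < v ∧ v < X (i + 1 + 1)
  · have g := h1.gap (by omega)
    have m := h0.mem (by omega)
    have s' := hT.strict i (X (i + 1)) (by omega)
    have m1 := hT.mono (i + 1) (show v + 1 ≤ X (i + 1 + 1) by omega)
    have m0 := hT.mono i (show X (i + 1) + 1 ≤ v by omega)
    split_ifs at e0 e1 <;> omega
  · split_ifs at e0 e1 <;> omega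

section Commute

variable {M : ℕ} {C X X' : ℕ → ℕ} {T T' S S' : ℕ → ℕ → ℕ}

/-- When the inserted entries differ, the entry inserted on the primed side is the one that the
column insertion moved across the preceding row boundary. -/
def Synced (C X X' : ℕ → ℕ) (i : ℕ) : Prop :=
  X i = X' i ∨
    (X' i = C i ∧ C i < X i ∧ ∃ j, i = j + 1 ∧ X j = X' j ∧ X j < C i)

lemma Synced.succ_of_ne (hC : ColBump M C T T') (hT : ColStrict M T)
    (hX : BumpSeq M X T S) (hX' : BumpSeq M X' T' S') {j : ℕ}
    (h : X' (j + 1) = C (j + 1)) (hlt : C (j + 1) < X (j + 1)) (hj : X j < C (j + 1)) :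
    X (j + 1 + 1) = X' (j + 1 + 1) := by
  have hb := hX (j + 1)
  have hb' := hX' (j + 1)
  have l := hb.lt_or
  have l' := hb'.lt_or
  have hz := hb.le
  have hz' := hb'.le
  have hx := (hX j).le
  have hm := hT.mono (j + 1)
  have tight := hC.tight j (by omega)
  have anti := hC.anti (j + 1)
  have gap := (hX j).gap (by omega)
  have hup : T j (X (j + 1)) ≤ T (j + 1) (C (j + 1) + 1) := by
    rw [tight, gap]; exact hT.mono j (by omega)
  have empty : ∀ v, v ≤ M → v ≤ X (j + 1) + 1 → T (j + 1) v ≤ T (j + 1) (C (j + 1) + 1) := by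
    intro v hv hvx
    rcases v with _ | v
    · exact hm (by omega)
    · exact (hT.strict j v (by omega)).trans ((hT.mono j (by omega)).trans hup)
  have agree : ∀ v, C (j + 1) < v → v ≤ M → T' (j + 1) v = T (j + 1) v := by
    intro v hv hvM
    have := hC.count (j + 1) v hvM
    rw [if_pos hv, if_pos (by omega)] at this
    omega
  have gap' := hb'.gap (by omega)
  rw [agree _ (by omega) hz', h, agree _ (by omega) (by omega)] at gap'
  have mem' : X' (j + 1 + 1) < M → T (j + 1) (X' (j + 1 + 1)) < T (j + 1) (X' (j + 1 + 1) + 1) := by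
    intro hlt'
    rw [← agree _ (by omega) (by omega), ← agree _ (by omega) (by omega)]
    exact hb'.mem hlt'
  have hxz : X' (j + 1 + 1) = M ∨ X (j + 1) < X' (j + 1 + 1) := by
    by_contra! hcon
    have := mem' (by omega)
    have := empty (X' (j + 1 + 1) + 1) (by omega) (by omega)
    omega
  by_cases hxM : X (j + 1) = M
  · omega
  have gapz := hb.gap (by omega)
  have e := empty (X (j + 1) + 1) (by omega) le_rfl
  have e' := hm (show C (j + 1) + 1 ≤ X (j + 1) + 1 by omega)
  rcases lt_trichotomy (X (j + 1 + 1)) (X' (j + 1 + 1)) with hlt' | heq | hlt'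
  · have := hb.mem (by omega)
    have := hm (show X (j + 1 + 1) + 1 ≤ X' (j + 1 + 1) by omega)
    omega
  · exact heq
  · have := mem' (by omega)
    have := hm (show X' (j + 1 + 1) + 1 ≤ X (j + 1 + 1) by omega)
    omega

lemma Synced.succ_of_eq (hC : ColBump M C T T') (hT : ColStrict M T) (hT' : ColStrict M T')
    (hX : BumpSeq M X T S) (hX' : BumpSeq M X' T' S') {i : ℕ}
    (h : X i = X' i) : Synced C X X' (i + 1) := by
  have hb := hX i
  have hb' := hX' i
  have l := hb.lt_or
  have l' := hb'.lt_or
  have hz := hb.le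
  have hz' := hb'.le
  have anti := hC.anti i
  have hp := hC.le i
  have hm := hT.mono i
  have hm' := hT'.mono i
  by_cases hxM : X i = M
  · left; omega
  have gap := hb.gap (by omega)
  have gap' := hb'.gap (by omega)
  rw [← h] at gap'
  rcases lt_trichotomy (X (i + 1)) (X' (i + 1)) with hlt | heq | hlt
  · exfalso
    have mem := hb.mem (by omega)
    have m1 := hm' (show X (i + 1) + 1 ≤ X' (i + 1) by omega)
    have m2 := hm' (show X i + 1 ≤ X (i + 1) by omega)
    have m3 := hm' (show X (i + 1) ≤ X (i + 1) + 1 by omega)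
    have c1 := hC.count i (X (i + 1)) (by omega)
    have c2 := hC.count i (X (i + 1) + 1) (by omega)
    have c3 := hC.count i (X i + 1) (by omega)
    have hpz : C i = X (i + 1) := by split_ifs at c1 c2 <;> omega
    have hqx : C (i + 1) ≤ X i := by split_ifs at c1 c2 c3 <;> omega
    rcases i with _ | j
    · have := hC.zero
      omega
    have tight := hC.tight j (by omega)
    have strict := hT'.strict j (X (j + 1)) (by omega)
    have c4 := hC.count j (X (j + 1)) (by omega)
    have antij := hC.anti j
    have memj := (hX j).mem (by omega)
    have m4 := hT.mono j (show X (j + 1) + 1 ≤ C (j + 1) by omega)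
    rw [← hpz] at c2 m1 m2 m3
    split_ifs at c2 c3 c4 <;> omega
  · exact Or.inl heq
  · have mem' := hb'.mem (by omega)
    have m1 := hm (show X' (i + 1) + 1 ≤ X (i + 1) by omega)
    have m2 := hm (show X i + 1 ≤ X' (i + 1) by omega)
    have c1 := hC.count i (X' (i + 1)) (by omega)
    have c2 := hC.count i (X' (i + 1) + 1) (by omega)
    have hq : X' (i + 1) = C (i + 1) := by split_ifs at c1 c2 <;> omega
    exact Or.inr ⟨hq, by omega, i, rfl, h, by omega⟩

lemma synced (hC : ColBump M C T T') (hT : ColStrict M T) (hT' : ColStrict M T')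
    (hX : BumpSeq M X T S) (hX' : BumpSeq M X' T' S') (h0 : X 0 = X' 0) (i : ℕ) :
    Synced C X X' i := by
  induction i with
  | zero => exact Or.inl h0
  | succ i ih =>
    rcases ih with h | ⟨h1, h2, j, rfl, -, h3⟩
    · exact Synced.succ_of_eq hC hT hT' hX hX' h
    · exact Or.inl (Synced.succ_of_ne hC hT hX hX' h1 h2 h3)

lemma ColBump.succ_le (hC : ColBump M C T T') (hT : ColStrict M T) (hT' : ColStrict M T')
    (hX : BumpSeq M X T S) (hX' : BumpSeq M X' T' S') {i : ℕ}
    (h : X' (i + 1) = C (i + 1)) (hlt : C (i + 1) < X (i + 1)) (hx : X i < C (i + 1)) :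
    X (i + 1) ≤ C i := by
  by_contra! hcon
  have hz := (hX i).le
  have anti := hC.anti i
  have gap := (hX i).gap (by omega)
  have mem' := (hX' i).mem (by omega)
  rw [h] at mem'
  have m1 := hT.mono i (show C i + 1 ≤ X (i + 1) by omega)
  have m2 := hT.mono i (show X i + 1 ≤ C (i + 1) by omega)
  have m3 := hT.mono i (show C (i + 1) ≤ C i by omega)
  have m4 := hT.mono i (show C (i + 1) + 1 ≤ C i + 1 by omega)
  have c1 := hC.count i (C i) (by omega)
  have c2 := hC.count i (C i + 1) (by omega)
  rcases anti.eq_or_lt with heq | hlt'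
  · rw [heq] at mem' c1 c2
    split_ifs at c1 c2 <;> omega
  · have m5 := hT'.mono i (show C i ≤ C i + 1 by omega)
    split_ifs at c1 c2 <;> omega

/-- When both insertions bump the same entry from row `i`, it is not bumped across the entry that
the column insertion moves into that row. -/
lemma ColBump.not_between (hC : ColBump M C T T') (hT : ColStrict M T) (hT' : ColStrict M T')
    (hX : BumpSeq M X T S) (hX' : BumpSeq M X' T' S') {i : ℕ} (hs : Synced C X X' i)
    (h : X (i + 1) = X' (i + 1)) (hlt : X i < C (i + 1)) : X (i + 1) ≤ C (i + 1) := by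
  by_contra! hcon
  have hz := (hX i).le
  have anti := hC.anti i
  rcases hs with hx | ⟨-, h2, -⟩
  · have gap := (hX i).gap (by omega)
    have gap' := (hX' i).gap (by omega)
    rw [← h, ← hx] at gap'
    have m1 := hT.mono i (show X i + 1 ≤ C (i + 1) by omega)
    have m2 := hT.mono i (show C (i + 1) ≤ C (i + 1) + 1 by omega)
    have m3 := hT.mono i (show C (i + 1) + 1 ≤ X (i + 1) by omega)
    have m1' := hT'.mono i (show X i + 1 ≤ C (i + 1) by omega)
    have m2' := hT'.mono i (show C (i + 1) ≤ C (i + 1) + 1 by omega)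
    have m3' := hT'.mono i (show C (i + 1) + 1 ≤ X (i + 1) by omega)
    have c1 := hC.count i (C (i + 1)) (by omega)
    have c2 := hC.count i (C (i + 1) + 1) (by omega)
    have hp : C i = C (i + 1) := by split_ifs at c1 c2 <;> omega
    rcases i with _ | k
    · have := hC.zero
      omega
    have tight := hC.tight k (by omega)
    rw [hp] at tight
    have strict := hT.strict k (X (k + 1)) (by omega)
    have mem := (hX k).mem (by omega)
    have m4 := hT.mono k (show X (k + 1) + 1 ≤ C (k + 1 + 1) by omega)
    omega
  · omega

/-- Row insertion preserves the column insertion relation. -/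
lemma ColBump.bumpSeq (hC : ColBump M C T T') (hT : ColStrict M T) (hT' : ColStrict M T')
    (hX : BumpSeq M X T S) (hX' : BumpSeq M X' T' S') (h0 : X 0 = X' 0) :
    ColBump M (fun i => if X i = X' i then C i else X i) S S' := by
  have hs := synced hC hT hT' hX hX' h0
  refine ⟨?_, fun i => ?_, fun i v hv => ?_, fun i => ?_⟩
  · simpa [h0] using hC.zero
  · have anti := hC.anti i
    rcases hs (i + 1) with h | ⟨h1, h2, j, hj, h3, h4⟩
    · rcases hs i with h' | ⟨-, h', -⟩ <;> simp only [h, if_true] <;> split_ifs <;> omega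
    · obtain rfl : i = j := by omega
      have := hC.succ_le hT hT' hX hX' h1 h2 h4
      simp only [h3, if_true]
      split_ifs <;> omega
  · have c := hC.count i v hv
    have e := (hX i).count v hv
    have e' := (hX' i).count v hv
    rcases hs i with h | ⟨h1, h2, j, rfl, -, h3⟩
    · rcases hs (i + 1) with h' | ⟨h1', h2', -⟩
      · simp only [h, h', if_true] at e e' ⊢
        omega
      · simp only [h, if_true, show X (i + 1) ≠ X' (i + 1) by omega, if_false]
        rw [h] at e
        rw [h1'] at e'
        omega
    · have h' := Synced.succ_of_ne hC hT hX hX' h1 h2 h3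
      simp only [h', if_true, show X (j + 1) ≠ X' (j + 1) by omega, if_false]
      rw [h'] at e
      rw [h1] at e'
      omega
  · have hb := hX i
    have hb1 := hX (i + 1)
    have l := hb.lt_or
    have l1 := hb1.lt_or
    rcases hs (i + 1) with h | ⟨h1, h2, j, hj, h3, h4⟩
    · simp only [h, if_true]
      intro hp
      have tight := hC.tight i hp
      have c := hb.count (C (i + 1)) hp.le
      have c1 := hb1.count (C (i + 1) + 1) hp
      have hbet := hC.not_between hT hT' hX hX' (hs i) h
      have hzp : X (i + 1) < C (i + 1) → X (i + 1 + 1) ≤ C (i + 1) := by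
        intro hlt
        by_contra! hcon
        have gap := hb1.gap (by omega)
        have mem := hb.mem (by omega)
        have strict := hT.strict i (X (i + 1)) (by omega)
        have m1 := hT.mono (i + 1) (show C (i + 1) + 1 ≤ X (i + 1 + 1) by omega)
        have m2 := hT.mono i (show X (i + 1) + 1 ≤ C (i + 1) by omega)
        omega
      split_ifs at c c1 <;> omega
    · obtain rfl : i = j := by omega
      simp only [show X (i + 1) ≠ X' (i + 1) by omega, if_false]
      intro hxM
      have tight := hC.tight i (by omega)
      have gap := hb.gap (by omega)
      have strict := hT.strict i (X (i + 1)) hxM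
      have c := hb.count (X (i + 1)) hxM.le
      have c1 := hb1.count (X (i + 1) + 1) hxM
      have m1 := hT.mono i (show X i + 1 ≤ C (i + 1) by omega)
      have m2 := hT.mono (i + 1) (show C (i + 1) + 1 ≤ X (i + 1) + 1 by omega)
      split_ifs at c c1 <;> omega

end Commute

lemma countLt_mono (r : List ℕ) : Monotone (countLt r) := by
  intro u v huv
  exact List.countP_mono_left (fun x _ hx => by simp at hx ⊢; omega)

lemma countLt_cons (y : ℕ) (r : List ℕ) (v : ℕ) :
    countLt (y :: r) v = countLt r v + if y < v then 1 else 0 := by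
  simp [countLt, List.countP_cons]

lemma countLt_eq_zero {r : List ℕ} {v : ℕ} (h : ∀ x ∈ r, v ≤ x) : countLt r v = 0 := by
  simpa [countLt, List.countP_eq_zero] using h

lemma countLt_add_count (r : List ℕ) (b : ℕ) :
    countLt r (b + 1) = countLt r b + r.count b := by
  induction r with
  | nil => simp [countLt]
  | cons y r ih =>
    rw [countLt_cons, countLt_cons, List.count_cons, ih]
    rcases lt_trichotomy y b with h | h | h
    · simp [h, h.ne, show y < b + 1 by omega]; omega
    · simp [h]; omega
    · simp [h.ne', show ¬ y < b by omega, show ¬ y < b + 1 by omega]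

/-- Weakly increasing rows with entries below `M`. -/
def RowBelow (M : ℕ) (r : List ℕ) : Prop := r.Pairwise (· ≤ ·) ∧ ∀ x ∈ r, x < M

lemma mem_rowInsert {x u : ℕ} {r : List ℕ} (h : u ∈ (rowInsert x r).1) : u = x ∨ u ∈ r := by
  induction r with
  | nil => simpa [rowInsert] using h
  | cons y r ih =>
    unfold rowInsert at h
    split_ifs at h <;> simp at h ⊢ <;> tauto

lemma rowInsert_snd_mem {x z : ℕ} {r : List ℕ} (h : (rowInsert x r).2 = some z) : z ∈ r := by
  induction r with
  | nil => simp [rowInsert] at h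
  | cons y r ih =>
    unfold rowInsert at h
    split_ifs at h <;> simp at h ⊢ <;> tauto

lemma RowBelow.rowInsert {M x : ℕ} {r : List ℕ} (hr : RowBelow M r) (hx : x < M) :
    RowBelow M (rowInsert x r).1 := by
  refine ⟨?_, fun u hu => (mem_rowInsert hu).elim (fun h => h ▸ hx) (hr.2 u)⟩
  have hs := hr.1
  clear hr
  induction r with
  | nil => simp [Plactic.rowInsert]
  | cons y r ih =>
    rw [List.pairwise_cons] at hs
    unfold Plactic.rowInsert
    split_ifs with h
    · exact List.pairwise_cons.2 ⟨fun u hu => h.le.trans (hs.1 u hu), hs.2⟩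
    · refine List.pairwise_cons.2 ⟨fun u hu => ?_, ih hs.2⟩
      rcases mem_rowInsert hu with rfl | hu
      · omega
      · exact hs.1 u hu

lemma RowBelow.bumps {M x : ℕ} {r : List ℕ} (hr : RowBelow M r) (hx : x < M) :
    Bumps M x ((Plactic.rowInsert x r).2.getD M) (countLt r)
      (countLt (Plactic.rowInsert x r).1) := by
  obtain ⟨hs, hb⟩ := hr
  induction r with
  | nil =>
    refine ⟨Or.inl hx, le_rfl, fun _ => rfl, fun h => absurd h (lt_irrefl _), fun v hv => ?_⟩
    simp [Plactic.rowInsert, countLt_cons, hv.not_gt]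
  | cons y r ih =>
    rw [List.pairwise_cons] at hs
    have hy := hb y (by simp)
    unfold Plactic.rowInsert
    split_ifs with h
    · have e : ∀ v ≤ y, countLt r v = 0 := fun v hv =>
        countLt_eq_zero fun u hu => hv.trans (hs.1 u hu)
      refine ⟨Or.inl h, hy.le, fun _ => ?_, fun _ => ?_, fun v hv => ?_⟩
      · simp [countLt_cons, e, show x + 1 ≤ y from h, show y < x + 1 ↔ False by simp; omega]
      · simp [countLt_cons, e]
      · simp only [countLt_cons, Option.getD_some]; omega
    · have ih := ih hs.2 (fun u hu => hb u (by simp [hu]))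
      have hlt := ih.lt_or
      refine ⟨hlt, ih.le, fun hx' => ?_, fun hz => ?_, fun v hv => ?_⟩
      · have := ih.gap hx'
        simp only [countLt_cons, this]
        simp [show y < x + 1 by omega]; omega
      · have := ih.mem hz
        simp only [countLt_cons] at this ⊢
        split_ifs <;> omega
      · have := ih.count v hv
        simp only [countLt_cons] at this ⊢
        omega

lemma forall_rowBelow_tInsert {M : ℕ} {T : List (List ℕ)} (hT : ∀ r ∈ T, RowBelow M r) {x : ℕ}
    (hx : x < M) : ∀ r ∈ tInsert x T, RowBelow M r := by
  induction T generalizing x with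
  | nil => simp [tInsert, RowBelow, hx]
  | cons r rs ih =>
    have hr := hT r (by simp)
    have hrs : ∀ r ∈ rs, RowBelow M r := fun u hu => hT u (by simp [hu])
    have hn := hr.rowInsert hx
    unfold tInsert
    rcases h : rowInsert x r with ⟨r', _ | y⟩ <;> rw [h] at hn
    · simpa using ⟨hn, hrs⟩
    · simpa using ⟨hn, ih hrs (hr.2 y (rowInsert_snd_mem (by rw [h])))⟩

lemma bumps_none (M : ℕ) (F : ℕ → ℕ) : Bumps M M M F F :=
  ⟨Or.inr ⟨rfl, rfl⟩, le_rfl, fun h => absurd h (lt_irrefl _), fun h => absurd h (lt_irrefl _),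
    fun _ _ => rfl⟩

lemma exists_bumpSeq {M : ℕ} {T : List (List ℕ)} (hT : ∀ r ∈ T, RowBelow M r) {x : ℕ}
    (hx : x < M) :
    ∃ X : ℕ → ℕ, X 0 = x ∧ BumpSeq M X (rowCounts T) (rowCounts (tInsert x T)) := by
  induction T generalizing x with
  | nil =>
    refine ⟨fun i => if i = 0 then x else M, rfl, fun i => ?_⟩
    cases i with
    | zero => exact RowBelow.bumps (r := []) ⟨List.Pairwise.nil, by simp⟩ hx
    | succ i => exact bumps_none M _
  | cons r rs ih =>
    have hr := hT r (by simp)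
    have hrs : ∀ r ∈ rs, RowBelow M r := fun u hu => hT u (by simp [hu])
    have hB := hr.bumps hx
    unfold tInsert
    rcases h : rowInsert x r with ⟨r', _ | y⟩ <;> rw [h] at hB
    · refine ⟨fun i => if i = 0 then x else M, rfl, fun i => ?_⟩
      cases i with
      | zero => exact hB
      | succ i => exact bumps_none M _
    · obtain ⟨Y, hY0, hY⟩ := ih hrs (hr.2 y (rowInsert_snd_mem (by rw [h])))
      refine ⟨fun i => Nat.casesOn i x Y, rfl, fun i => ?_⟩
      cases i with
      | zero => subst hY0; exact hB
      | succ i => exact hY i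

lemma P_append_singleton (w : List ℕ) (a : ℕ) : P (w ++ [a]) = tInsert a (P w) := by
  simp [P]

lemma forall_rowBelow_P {M : ℕ} {w : List ℕ} (hw : ∀ x ∈ w, x < M) :
    ∀ r ∈ P w, RowBelow M r := by
  induction w using List.reverseRecOn with
  | nil => simp [P]
  | append_singleton w a ih =>
    rw [P_append_singleton]
    exact forall_rowBelow_tInsert (ih fun x hx => hw x (by simp [hx])) (hw a (by simp))

lemma colStrict_P {M : ℕ} {w : List ℕ} (hw : ∀ x ∈ w, x < M) :
    ColStrict M (rowCounts (P w)) := by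
  induction w using List.reverseRecOn with
  | nil => exact ⟨fun i => countLt_mono _, fun i v _ => by simp [P, rowCounts, countLt]⟩
  | append_singleton w a ih =>
    have hw' : ∀ x ∈ w, x < M := fun x hx => hw x (by simp [hx])
    obtain ⟨X, -, hX⟩ := exists_bumpSeq (forall_rowBelow_P hw') (hw a (by simp))
    rw [P_append_singleton]
    exact (ih hw').bumpSeq hX fun i => countLt_mono _

lemma exists_colBump_P {M a : ℕ} (ha : a < M) {w : List ℕ} (hw : ∀ x ∈ w, x < M) :
    ∃ C, ColBump M C (rowCounts (P w)) (rowCounts (P (a :: w))) := by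
  induction w using List.reverseRecOn with
  | nil =>
    refine ⟨fun i => if i = 0 then M else a, rfl, fun i => ?_, fun i v hv => ?_, fun i _ => ?_⟩
    · rcases i with _ | i <;> simp [ha.le]
    · rcases i with _ | i
      · simp [P, tInsert, rowCounts, countLt, List.countP_cons, hv.not_gt]
      · simp [P, tInsert, rowCounts, countLt]
    · simp [P, rowCounts, countLt]
  | append_singleton w x ih =>
    have hw' : ∀ x ∈ w, x < M := fun x hx => hw x (by simp [hx])
    have haw : ∀ x ∈ a :: w, x < M := by simpa using ⟨ha, hw'⟩
    have hx := hw x (by simp)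
    obtain ⟨C, hC⟩ := ih hw'
    obtain ⟨X, hX0, hX⟩ := exists_bumpSeq (forall_rowBelow_P hw') hx
    obtain ⟨X', hX0', hX'⟩ := exists_bumpSeq (forall_rowBelow_P haw) hx
    rw [← List.cons_append, P_append_singleton, P_append_singleton]
    exact ⟨_, hC.bumpSeq (colStrict_P hw') (colStrict_P haw) hX hX' (hX0.trans hX0'.symm)⟩

lemma row_count_eq (w : List ℕ) (i b : ℕ) :
    rowCounts (P w) i (b + 1) = rowCounts (P w) i b + (row w i).count b :=
  countLt_add_count _ b

lemma Bumps.count_eq {M x z b : ℕ} {r s : List ℕ} (h : Bumps M x z (countLt r) (countLt s))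
    (hb : b < M) :
    s.count b + (if z = b then 1 else 0) = r.count b + (if x = b then 1 else 0) := by
  have h1 := h.count b hb.le
  have h2 := h.count (b + 1) hb
  rw [countLt_add_count, countLt_add_count] at h2
  split_ifs at h1 h2 ⊢ <;> omega

lemma sum_row_append_le {a b : ℕ} (hab : a ≠ b) (w : List ℕ) (k : ℕ) :
    ∑ i ∈ Finset.range k, (row (w ++ [a]) i).count b ≤
      ∑ i ∈ Finset.range k, (row w i).count b := by
  set M := w.sum + a + b + 1 with hM
  have hw : ∀ x ∈ w, x < M := fun x hx => by
    have := List.le_sum_of_mem hx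
    omega
  obtain ⟨X, hX0, hX⟩ := exists_bumpSeq (forall_rowBelow_P hw) (show a < M by omega)
  rw [← P_append_singleton] at hX
  have key : ∑ i ∈ Finset.range k, (row (w ++ [a]) i).count b + (if X k = b then 1 else 0) =
      ∑ i ∈ Finset.range k, (row w i).count b := by
    induction k with
    | zero => simp [hX0, hab]
    | succ k ih =>
      have := (hX k).count_eq (show b < M by omega)
      simp only [Finset.sum_range_succ, row] at ih ⊢
      omega
  omega

lemma le_sum_row_cons (a b : ℕ) (w : List ℕ) (k : ℕ) :
    ∑ i ∈ Finset.range k, (row w i).count b ≤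
      ∑ i ∈ Finset.range k, (row (a :: w) i).count b := by
  set M := w.sum + a + b + 1 with hM
  have hw : ∀ x ∈ w, x < M := fun x hx => by
    have := List.le_sum_of_mem hx
    omega
  obtain ⟨C, hC⟩ := exists_colBump_P (show a < M by omega) hw
  have key : ∑ i ∈ Finset.range k, (row (a :: w) i).count b =
      ∑ i ∈ Finset.range k, (row w i).count b + (if C k = b then 1 else 0) := by
    induction k with
    | zero => simp [hC.zero]; omega
    | succ k ih =>
      have h1 := hC.count k b (by omega)
      have h2 := hC.count k (b + 1) (by omega)
      rw [row_count_eq, row_count_eq] at h2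
      simp only [Finset.sum_range_succ]
      split_ifs at h1 h2 ih ⊢ <;> omega
  omega

end Plactic

open Plactic in
theorem stmt_0 (a b : ℕ) (ha : 0 < a) (hb : 0 < b) (hab : a ≠ b)
    (w : List ℕ) (hw : ∀ x ∈ w, 0 < x) (k : ℕ) :
    (∑ i ∈ Finset.range k, (row (w ++ [a]) i).count b) ≤
      (∑ i ∈ Finset.range k, (row w i).count b) ∧
    (∑ i ∈ Finset.range k, (row w i).count b) ≤
      (∑ i ∈ Finset.range k, (row (a :: w) i).count b) := by
  exact ⟨sum_row_append_le hab w k, le_sum_row_cons a b w k⟩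
end

section
/- If w is in the centralizer C(u) = {w : uw is Knuth-equivalent to wu} and b is a positive integer not appearing in u, then α_b(P(wu)) = α_b(P(w)) = α_b(P(uw)), where α_b records the row multiplicities of b. -/
namespace Plactic

/-! ### Knuth equivalence as a congruence -/

theorem KEquiv.refl (u : List ℕ) : KEquiv u u := Relation.EqvGen.refl u

theorem KEquiv.symm {u v : List ℕ} (h : KEquiv u v) : KEquiv v u := Relation.EqvGen.symm _ _ h

theorem KEquiv.trans {u v w : List ℕ} (h : KEquiv u v) (h' : KEquiv v w) : KEquiv u w :=
  Relation.EqvGen.trans _ _ _ h h'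

theorem KStep.append {u v : List ℕ} (h : KStep u v) (p q : List ℕ) :
    KStep (p ++ u ++ q) (p ++ v ++ q) := by
  cases h with
  | k1 x y a b c h1 h2 =>
    have := KStep.k1 (p ++ x) (y ++ q) a b c h1 h2
    simpa [List.append_assoc] using this
  | k2 x y a b c h1 h2 =>
    have := KStep.k2 (p ++ x) (y ++ q) a b c h1 h2
    simpa [List.append_assoc] using this

theorem KEquiv.append {u v : List ℕ} (h : KEquiv u v) (p q : List ℕ) :
    KEquiv (p ++ u ++ q) (p ++ v ++ q) := by
  induction h with
  | rel _ _ h => exact Relation.EqvGen.rel _ _ (h.append p q)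
  | refl _ => exact KEquiv.refl _
  | symm _ _ _ ih => exact ih.symm
  | trans _ _ _ _ _ ih1 ih2 => exact ih1.trans ih2

theorem KEquiv.append_left {u v : List ℕ} (p : List ℕ) (h : KEquiv u v) :
    KEquiv (p ++ u) (p ++ v) := by
  simpa using h.append p []

theorem KEquiv.append_right {u v : List ℕ} (q : List ℕ) (h : KEquiv u v) :
    KEquiv (u ++ q) (v ++ q) := by
  simpa using h.append [] q

/-- A small letter moves left through larger ones that follow a larger letter. -/
theorem kEquiv_move_left (X : List ℕ) : ∀ (e g : ℕ), g < e → (e :: X).Pairwise (· ≤ ·) →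
    KEquiv (e :: (X ++ [g])) (e :: g :: X) := by
  induction X with
  | nil => intro e g _ _; exact KEquiv.refl _
  | cons x X ih =>
    intro e g hg hs
    have hex : e ≤ x := by simp at hs; omega
    have h1 := (ih x g (by omega) hs.tail).append_left [e]
    have h2 : KEquiv ([] ++ [e, g, x] ++ X) ([] ++ [e, x, g] ++ X) :=
      Relation.EqvGen.rel _ _ (KStep.k2 [] X g e x hg hex)
    exact KEquiv.trans h1 h2.symm

/-- A large letter moves left through a row that is followed by a smaller letter. -/
theorem kEquiv_bump_left (H : List ℕ) : ∀ (e g : ℕ), g < e → (H ++ [g]).Pairwise (· ≤ ·) →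
    KEquiv (H ++ [e, g]) (e :: (H ++ [g])) := by
  induction H with
  | nil => intro e g _ _; exact KEquiv.refl _
  | cons h H ih =>
    intro e g hg hs
    have h1 := (ih e g hg hs.tail).append_left [h]
    refine h1.trans ?_
    cases H with
    | nil =>
      have : h ≤ g := by simpa using hs
      exact Relation.EqvGen.rel _ _ (KStep.k1 [] [] h g e this hg)
    | cons h' H =>
      simp [List.pairwise_append] at hs
      exact Relation.EqvGen.rel _ _ (KStep.k1 [] (H ++ [g]) h h' e (by grind) (by grind))

/-- Row insertion of a letter, as a Knuth equivalence. -/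
theorem kEquiv_rowInsert (H X : List ℕ) (e g : ℕ) (hg : g < e)
    (h1 : (H ++ [g]).Pairwise (· ≤ ·)) (h2 : (e :: X).Pairwise (· ≤ ·)) :
    KEquiv (H ++ e :: (X ++ [g])) (e :: (H ++ g :: X)) := by
  have a := (kEquiv_move_left X e g hg h2).append_left H
  have b := (kEquiv_bump_left H e g hg h1).append_right X
  simp at a b
  exact a.trans b

/-- Inserting the row `G` into the row `H ++ E ++ F` bumps exactly `E`. -/
theorem kEquiv_bump_block (E : List ℕ) : ∀ (G H F : List ℕ), List.Forall₂ (· < ·) G E →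
    (H ++ (E ++ F)).Pairwise (· ≤ ·) → (H ++ (G ++ F)).Pairwise (· ≤ ·) →
    KEquiv (H ++ (E ++ (F ++ G))) (E ++ (H ++ (G ++ F))) := by
  induction E with
  | nil =>
    intro G H F hG _ _
    cases hG
    simpa using KEquiv.refl _
  | cons e E ih =>
    intro G H F hG h1 h2
    cases hG with
    | @cons g _ G _ hg hG =>
    have a := (kEquiv_rowInsert H (E ++ F) e g hg
      (h2.sublist (by simp)) (h1.sublist (by simp))).append_right G
    have b := (ih G (H ++ [g]) F hG (by
        simp [List.pairwise_append] at h1 h2 ⊢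
        grind) (by simpa using h2)).append_left [e]
    simp at a b ⊢
    exact a.trans b

/-! ### Semistandard tableaux -/

/-- `Dom r s`: the row `s` may be placed directly below the row `r`. -/
def Dom : List ℕ → List ℕ → Prop
  | _, [] => True
  | [], _ :: _ => False
  | a :: r, b :: s => a < b ∧ Dom r s

/-- Semistandard tableaux, with empty rows allowed at the bottom. -/
def SSYT : List (List ℕ) → Prop
  | [] => True
  | r :: S => r.Pairwise (· ≤ ·) ∧ Dom r (S.headD []) ∧ SSYT S

/-- The row reading word of a tableau. -/
def rowReading : List (List ℕ) → List ℕ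
  | [] => []
  | r :: S => rowReading S ++ r

/-- The number of occurrences of `b` in the first `k` rows. -/
def countTop (b : ℕ) : ℕ → List (List ℕ) → ℕ
  | 0, _ => 0
  | _ + 1, [] => 0
  | k + 1, r :: S => r.count b + countTop b k S

theorem dom_nil (r : List ℕ) : Dom r [] := by cases r <;> trivial

theorem dom_append {C A D B : List ℕ} (h : List.Forall₂ (· < ·) C A) (h' : Dom D B) :
    Dom (C ++ D) (A ++ B) := by
  induction h with
  | nil => exact h'
  | cons h _ ih => exact ⟨h, ih⟩

theorem Dom.split {D : List ℕ} : ∀ {B : List ℕ}, Dom D B →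
    ∃ D₁ D₂, D = D₁ ++ D₂ ∧ List.Forall₂ (· < ·) D₁ B := by
  induction D with
  | nil =>
    intro B h
    cases B with
    | nil => exact ⟨[], [], rfl, .nil⟩
    | cons => exact h.elim
  | cons d D ih =>
    intro B h
    cases B with
    | nil => exact ⟨[], d :: D, rfl, .nil⟩
    | cons e B =>
      obtain ⟨D₁, D₂, rfl, h'⟩ := ih h.2
      exact ⟨d :: D₁, D₂, rfl, .cons h.1 h'⟩

theorem Dom.cons {D : List ℕ} : ∀ {z : ℕ} {B : List ℕ}, Dom D B → (z :: D).Pairwise (· ≤ ·) →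
    B.Pairwise (· ≤ ·) → Dom (z :: D) B := by
  induction D with
  | nil =>
    intro z B h _ _
    cases B with
    | nil => trivial
    | cons => exact h.elim
  | cons d D ih =>
    intro z B h hD hB
    cases B with
    | nil => trivial
    | cons e B =>
      have hd := h.1
      refine ⟨by simp at hD; omega, ?_⟩
      cases B with
      | nil => trivial
      | cons f B => exact ih h.2 hD.tail hB.tail

theorem Dom.splice {A : List ℕ} : ∀ {A' B q : List ℕ} {z : ℕ}, A'.length = A.length →
    Dom (A ++ z :: B) q → Dom (A' ++ B) q → Dom (A ++ B) q := by
  induction A with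
  | nil =>
    intro A' B q z hl _ h
    simpa [List.length_eq_zero_iff.1 hl] using h
  | cons a A ih =>
    intro A' B q z hl h hs
    cases A' with
    | nil => simp at hl
    | cons a' A' =>
      cases q with
      | nil => trivial
      | cons c q => exact ⟨h.1, ih (by simpa using hl) h.2 hs.2⟩

/-- The row `R`, an enlargement of `s`, has a first entry `z` that is too small to lie below `r`,
and this entry can be moved up into `r`. -/
def Slides (r s R : List ℕ) : Prop :=
  ∃ (A : List ℕ) (z : ℕ) (B C D A' : List ℕ), R = A ++ z :: B ∧ s = A' ++ B ∧
    A'.length = A.length ∧ r = C ++ D ∧ List.Forall₂ (· < ·) C A ∧ (∀ d ∈ D, z ≤ d) ∧ Dom D B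

theorem Slides.cons {r s R : List ℕ} (h : Slides r s R) {c a a' : ℕ} (hc : c < a) :
    Slides (c :: r) (a' :: s) (a :: R) := by
  obtain ⟨A, z, B, C, D, A', rfl, rfl, hl, rfl, hf, hz, hd⟩ := h
  exact ⟨a :: A, z, B, c :: C, D, a' :: A', rfl, rfl, by simpa using hl, rfl, .cons hc hf, hz, hd⟩

theorem dom_or_slides_cons (s : List ℕ) : ∀ (r : List ℕ) (t : ℕ), r.Pairwise (· ≤ ·) →
    Dom r s → Dom r (t :: s) ∨ Slides r s (t :: s) := by
  induction s with
  | nil =>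
    intro r t hr _
    cases r with
    | nil => exact .inr ⟨[], t, [], [], [], [], rfl, rfl, rfl, rfl, .nil, by simp, trivial⟩
    | cons c r =>
      by_cases htc : t ≤ c
      · refine .inr ⟨[], t, [], [], c :: r, [], rfl, rfl, rfl, rfl, .nil, ?_, trivial⟩
        intro d hd
        rcases List.mem_cons.1 hd with rfl | hd
        · exact htc
        · exact htc.trans (List.rel_of_pairwise_cons hr hd)
      · exact .inl ⟨by omega, dom_nil _⟩
  | cons e s ih =>
    intro r t hr h
    cases r with
    | nil => exact h.elim
    | cons c r =>
      by_cases htc : t ≤ c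
      · refine .inr ⟨[], t, e :: s, [], c :: r, [], rfl, rfl, rfl, rfl, .nil, ?_, h⟩
        intro d hd
        rcases List.mem_cons.1 hd with rfl | hd
        · exact htc
        · exact htc.trans (List.rel_of_pairwise_cons hr hd)
      · rcases ih r e hr.tail h.2 with h' | h'
        · exact .inl ⟨by omega, h'⟩
        · exact .inr (h'.cons (by omega))

theorem dom_or_slides (s₁ : List ℕ) : ∀ (r s₂ : List ℕ) (t : ℕ), r.Pairwise (· ≤ ·) →
    Dom r (s₁ ++ s₂) → Dom r (s₁ ++ t :: s₂) ∨ Slides r (s₁ ++ s₂) (s₁ ++ t :: s₂) := by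
  induction s₁ with
  | nil => intro r s₂ t hr h; exact dom_or_slides_cons s₂ r t hr h
  | cons a s₁ ih =>
    intro r s₂ t hr h
    cases r with
    | nil => exact h.elim
    | cons c r =>
      rcases ih r s₂ t hr.tail h.2 with h' | h'
      · exact .inl ⟨h.1, h'⟩
      · exact .inr (h'.cons h.1)

theorem le_of_forall₂_lt {C A : List ℕ} {z : ℕ} (h : List.Forall₂ (· < ·) C A)
    (hA : ∀ a ∈ A, a ≤ z) : ∀ c ∈ C, c ≤ z := by
  induction h with
  | nil => simp
  | cons h _ ih =>
    simp only [List.mem_cons, forall_eq_or_imp] at hA ⊢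
    exact ⟨by omega, ih hA.2⟩

/-- Moving `z` from a row to the row above it is a Knuth equivalence. -/
theorem kEquiv_slide {A B C D : List ℕ} {z : ℕ} (hR : (A ++ z :: B).Pairwise (· ≤ ·))
    (hr : (C ++ D).Pairwise (· ≤ ·)) (hf : List.Forall₂ (· < ·) C A) (hz : ∀ d ∈ D, z ≤ d)
    (hd : Dom D B) :
    KEquiv ((A ++ z :: B) ++ (C ++ D)) ((A ++ B) ++ (C ++ z :: D)) := by
  obtain ⟨D₁, D₂, rfl, hf'⟩ := hd.split
  have hCz : ∀ c ∈ C, c ≤ z := le_of_forall₂_lt hf (by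
    simp [List.pairwise_append] at hR; grind)
  have hCzB : (C ++ z :: B).Pairwise (· ≤ ·) := by
    simp [List.pairwise_append] at hR hr ⊢
    grind
  have e1 := (kEquiv_bump_block A C [] (z :: B) hf hR hCzB).append_right (D₁ ++ D₂)
  have e2 := ((kEquiv_bump_block B D₁ [z] [] hf' (by
      rw [List.append_nil]; exact hR.sublist (List.sublist_append_right _ _))
    (by simp [List.pairwise_append] at hr ⊢; grind)).append_right D₂).append_left (A ++ C)
  have e3 := (kEquiv_bump_block A C [] B hf (hR.sublist (by simp))
    (hCzB.sublist (by simp))).append_right (z :: (D₁ ++ D₂))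
  simp at e1 e2 e3 ⊢
  exact (e1.trans e2).trans e3.symm

/-! ### Left multiplication by a letter -/

/-- The result of multiplying `s :: S` by `x` on the left, except that the last carried letter
has been added to the top row `s` regardless of what lies above it. -/
def LeftMul (x : ℕ) (s : List ℕ) (S : List (List ℕ)) : Prop :=
  (∃ S', KEquiv (x :: (rowReading S ++ s)) (rowReading S' ++ s) ∧ SSYT (s :: S') ∧
    ∀ b k, countTop b k S ≤ countTop b k S') ∨
  (∃ S' s₁ t s₂, s = s₁ ++ s₂ ∧
    KEquiv (x :: (rowReading S ++ s)) (rowReading S' ++ (s₁ ++ t :: s₂)) ∧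
    SSYT (s :: S') ∧ SSYT ((s₁ ++ t :: s₂) :: S') ∧
    ∀ b k, countTop b k S ≤ countTop b k S' + [t].count b)

theorem LeftMul.step {x : ℕ} {s : List ℕ} {S : List (List ℕ)} (h : LeftMul x s S)
    {r : List ℕ} (hr : r.Pairwise (· ≤ ·)) (hd : Dom r s) : LeftMul x r (s :: S) := by
  rcases h with ⟨S', hK, hS, hc⟩ | ⟨S', s₁, t, s₂, rfl, hK, hS, hS', hc⟩
  · refine .inl ⟨s :: S', ?_, ⟨hr, hd, hS⟩, ?_⟩
    · simpa [rowReading] using hK.append_right r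
    · rintro b (_ | k)
      · exact le_rfl
      · simpa [countTop] using hc b k
  · rcases dom_or_slides s₁ r s₂ t hr hd with h | ⟨A, z, B, C, D, A', hR, hs, hl, rfl, hf, hz, hd'⟩
    · refine .inl ⟨(s₁ ++ t :: s₂) :: S', ?_, ⟨hr, h, hS'⟩, ?_⟩
      · simpa [rowReading] using hK.append_right r
      · rintro b (_ | k)
        · exact le_rfl
        · have := hc b k
          simp [countTop, List.count_append, List.count_cons] at this ⊢
          omega
    · have hcount : ∀ b, (s₁ ++ s₂).count b + [t].count b = (A ++ B).count b + [z].count b := by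
        intro b
        have := congrArg (List.count b) hR
        simp [List.count_append, List.count_cons] at this ⊢
        omega
      rw [hR] at hK hS'
      have hAB : SSYT ((A ++ B) :: S') :=
        ⟨hS'.1.sublist (by simp), Dom.splice hl hS'.2.1 (hs ▸ hS.2.1), hS.2.2⟩
      have hB : B.Pairwise (· ≤ ·) := hS'.1.sublist (by simp)
      have hA : ∀ a ∈ A, a ≤ z := by
        have := hS'.1
        simp [List.pairwise_append] at this; grind
      have hCz := le_of_forall₂_lt hf hA
      have hzD : (z :: D).Pairwise (· ≤ ·) := List.pairwise_cons.2 ⟨hz, hr.sublist (by simp)⟩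
      have hCzD : (C ++ z :: D).Pairwise (· ≤ ·) := by
        simp [List.pairwise_append] at hr hzD ⊢
        grind
      refine .inr ⟨(A ++ B) :: S', C, z, D, rfl, ?_, ⟨hr, dom_append hf hd', hAB⟩,
        ⟨hCzD, dom_append hf (hd'.cons hzD hB), hAB⟩, ?_⟩
      · have e1 := hK.append_right (C ++ D)
        have e2 := (kEquiv_slide hS'.1 hr hf hz hd').append_left (rowReading S')
        simp [rowReading] at e1 e2 ⊢
        exact e1.trans e2
      · rintro b (_ | k)
        · exact Nat.zero_le _
        · have h1 := hc b k
          have h2 := hcount b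
          simp only [countTop]
          omega

theorem leftMul (x : ℕ) (T : List (List ℕ)) : ∀ r, SSYT (r :: T) → LeftMul x r (T ++ [[]]) := by
  have base : LeftMul x [] [] :=
    .inr ⟨[], [], x, [], rfl, KEquiv.refl _, ⟨.nil, trivial, trivial⟩,
      ⟨by simp, trivial, trivial⟩, by rintro b (_ | k) <;> simp [countTop]⟩
  induction T with
  | nil => intro r h; exact base.step h.1 (dom_nil r)
  | cons s T ih => intro r h; exact (ih s h.2.2).step h.1 h.2.1

theorem rowReading_append_nil (T : List (List ℕ)) : rowReading (T ++ [[]]) = rowReading T := by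
  induction T with
  | nil => rfl
  | cons r T ih => simp [rowReading, ih]

theorem countTop_append_nil (b : ℕ) (T : List (List ℕ)) :
    ∀ k, countTop b k (T ++ [[]]) = countTop b k T := by
  induction T with
  | nil => rintro (_ | _ | k) <;> simp [countTop]
  | cons r T ih => rintro (_ | k) <;> simp [countTop, ih]

/-- Multiplying a tableau by a letter on the left moves entries weakly upwards. -/
theorem exists_ssyt_cons (x : ℕ) (T : List (List ℕ)) (hT : SSYT T) :
    ∃ T', SSYT T' ∧ KEquiv (x :: rowReading T) (rowReading T') ∧
      ∀ b k, countTop b k T ≤ countTop b k T' := by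
  cases T with
  | nil =>
    exact ⟨[[x]], ⟨by simp, trivial, trivial⟩, KEquiv.refl _, by rintro b (_ | k) <;>
      simp [countTop]⟩
  | cons r T =>
    rcases leftMul x T r hT with ⟨S', hK, hS, hc⟩ | ⟨S', s₁, t, s₂, rfl, hK, -, hS, hc⟩
    · refine ⟨r :: S', hS, by simpa [rowReading, rowReading_append_nil] using hK, ?_⟩
      rintro b (_ | k)
      · exact le_rfl
      · have := hc b k
        rw [countTop_append_nil] at this
        simpa [countTop] using this
    · refine ⟨_, hS, by simpa [rowReading, rowReading_append_nil] using hK, ?_⟩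
      rintro b (_ | k)
      · exact le_rfl
      · have := hc b k
        rw [countTop_append_nil] at this
        simp [countTop, List.count_append, List.count_cons] at this ⊢
        omega

theorem exists_ssyt_append (u : List ℕ) (T : List (List ℕ)) (hT : SSYT T) :
    ∃ T', SSYT T' ∧ KEquiv (u ++ rowReading T) (rowReading T') ∧
      ∀ b k, countTop b k T ≤ countTop b k T' := by
  induction u with
  | nil => exact ⟨T, hT, KEquiv.refl _, fun _ _ => le_rfl⟩
  | cons x u ih =>
    obtain ⟨T₁, h₁, hK₁, hc₁⟩ := ih
    obtain ⟨T₂, h₂, hK₂, hc₂⟩ := exists_ssyt_cons x T₁ h₁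
    exact ⟨T₂, h₂, (hK₁.append_left [x]).trans hK₂, fun b k => (hc₁ b k).trans (hc₂ b k)⟩

/-! ### Row-by-row description of insertion -/

/-- Insertion of a word into a tableau. -/
def insertWord (T : List (List ℕ)) (w : List ℕ) : List (List ℕ) :=
  w.foldl (fun t x => tInsert x t) T

/-- Insertion of a word into a row: the final row and the word of bumped letters. -/
def rowRun : List ℕ → List ℕ → List ℕ × List ℕ
  | r, [] => (r, [])
  | r, x :: w =>
    ((rowRun (rowInsert x r).1 w).1, (rowInsert x r).2.toList ++ (rowRun (rowInsert x r).1 w).2)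

theorem insertWord_append (T : List (List ℕ)) (v w : List ℕ) :
    insertWord T (v ++ w) = insertWord (insertWord T v) w := by
  simp [insertWord]

theorem tInsert_cons (x : ℕ) (r : List ℕ) (S : List (List ℕ)) :
    tInsert x (r :: S) = (rowInsert x r).1 :: insertWord S (rowInsert x r).2.toList := by
  rw [tInsert]
  split <;> rename_i h <;> simp [h, insertWord]

theorem insertWord_cons (w : List ℕ) : ∀ (r : List ℕ) (S : List (List ℕ)),
    insertWord (r :: S) w = (rowRun r w).1 :: insertWord S (rowRun r w).2 := by
  induction w with
  | nil => intro r S; rfl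
  | cons x w ih =>
    intro r S
    have : insertWord (r :: S) (x :: w) = insertWord (tInsert x (r :: S)) w := rfl
    rw [this, tInsert_cons, ih, rowRun, insertWord_append]

theorem insertWord_nil (w : List ℕ) (hw : w ≠ []) : insertWord [] w = insertWord [[]] w := by
  cases w with
  | nil => exact (hw rfl).elim
  | cons x w => rfl

theorem rowInsert_mem (x : ℕ) (r : List ℕ) : ∀ y ∈ (rowInsert x r).1, y = x ∨ y ∈ r := by
  induction r with
  | nil => simp [rowInsert]
  | cons a r ih => grind [rowInsert]

theorem rowInsert_bumped (x : ℕ) (r : List ℕ) : ∀ y ∈ (rowInsert x r).2, x < y ∧ y ∈ r := by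
  induction r with
  | nil => simp [rowInsert]
  | cons a r ih => grind [rowInsert]

theorem rowInsert_sorted (x : ℕ) (r : List ℕ) (h : r.Pairwise (· ≤ ·)) :
    (rowInsert x r).1.Pairwise (· ≤ ·) := by
  induction r with
  | nil => simp [rowInsert]
  | cons a r ih =>
    have := rowInsert_mem x r
    rw [List.pairwise_cons] at h
    rw [rowInsert]
    split
    · exact List.pairwise_cons.2 ⟨fun y hy => by have := h.1 y hy; omega, h.2⟩
    · refine List.pairwise_cons.2 ⟨fun y hy => ?_, ih h.2⟩
      rcases this y hy with rfl | hy
      · omega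
      · exact h.1 y hy

theorem rowInsert_count (b x : ℕ) (r : List ℕ) :
    (rowInsert x r).1.count b + (rowInsert x r).2.toList.count b = r.count b + [x].count b := by
  induction r with
  | nil => simp [rowInsert]
  | cons a r ih =>
    rw [rowInsert]
    split
    · simp [List.count_cons]; omega
    · simp only [List.count_cons] at ih ⊢; omega

/-- A letter smaller than the one just inserted always bumps something. -/
theorem rowInsert_bump_of_lt (b c : ℕ) (hbc : b < c) (r : List ℕ) (h : r.Pairwise (· ≤ ·)) :
    ∃ p, (rowInsert b (rowInsert c r).1).2 = some p ∧ p ≤ c := by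
  induction r with
  | nil => exact ⟨c, by simp [rowInsert, hbc], le_rfl⟩
  | cons a r ih =>
    by_cases hca : c < a
    · exact ⟨c, by simp [rowInsert, hca, hbc], le_rfl⟩
    · by_cases hba : b < a
      · exact ⟨a, by simp [rowInsert, hca, hba], by omega⟩
      · obtain ⟨p, hp, hpc⟩ := ih h.tail
        exact ⟨p, by simp [rowInsert, hca, hba, hp], hpc⟩

/-- A letter bumped after a weakly larger insertion is weakly larger. -/
theorem rowInsert_bump_of_le (b c : ℕ) (hbc : b ≤ c) (r : List ℕ) (h : r.Pairwise (· ≤ ·)) (o : ℕ)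
    (ho : (rowInsert c (rowInsert b r).1).2 = some o) :
    ∃ p, (rowInsert b r).2 = some p ∧ p ≤ o := by
  induction r with
  | nil => simp [rowInsert, Nat.not_lt.2 hbc] at ho
  | cons a r ih =>
    by_cases hba : b < a
    · refine ⟨a, by simp [rowInsert, hba], ?_⟩
      simp [rowInsert, hba, Nat.not_lt.2 hbc] at ho
      have := rowInsert_bumped c r o (by simp [ho])
      exact List.rel_of_pairwise_cons h this.2
    · have hca : ¬ c < a := by omega
      simp [rowInsert, hba, hca] at ho
      obtain ⟨p, hp, hpo⟩ := ih h.tail ho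
      exact ⟨p, by simp [rowInsert, hba, hp], hpo⟩

/-- The triples exchanged by an elementary Knuth transposition. -/
inductive KTriple : List ℕ → List ℕ → Prop
  | k1 (a b c : ℕ) : a ≤ b → b < c → KTriple [a, c, b] [c, a, b]
  | k2 (a b c : ℕ) : a < b → b ≤ c → KTriple [b, a, c] [b, c, a]

theorem rowRun_cons_of_le {y : ℕ} (w : List ℕ) : ∀ (r : List ℕ), (∀ x ∈ w, y ≤ x) →
    rowRun (y :: r) w = (y :: (rowRun r w).1, (rowRun r w).2) := by
  induction w with
  | nil => intro r _; rfl
  | cons x w ih =>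
    intro r h
    simp only [List.mem_cons, forall_eq_or_imp] at h
    have hx : ¬ x < y := by omega
    simp [rowRun, rowInsert, hx, ih _ h.2]

theorem KTriple.rowRun {u v : List ℕ} (h : KTriple u v) (r : List ℕ)
    (hr : r.Pairwise (· ≤ ·)) : (rowRun r u).1 = (rowRun r v).1 ∧
      ((rowRun r u).2 = (rowRun r v).2 ∨ r ≠ [] ∧
        (KTriple (rowRun r u).2 (rowRun r v).2 ∨ KTriple (rowRun r v).2 (rowRun r u).2)) := by
  induction r with
  | nil =>
    cases h with
    | k1 a b c h1 h2 =>
      have h3 : ¬ c < a := by omega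
      have h4 : ¬ b < a := by omega
      have h5 : a < c := by omega
      simp [Plactic.rowRun, rowInsert, *]
    | k2 a b c h1 h2 =>
      have h3 : ¬ c < a := by omega
      have h4 : ¬ c < b := by omega
      simp [Plactic.rowRun, rowInsert, *]
  | cons y ys ih =>
    have hys := hr.tail
    have hy : ∀ {x}, x ∈ ys → y ≤ x := List.rel_of_pairwise_cons hr
    cases h with
    | k1 a b c h1 h2 =>
      by_cases hya : y ≤ a
      · rw [rowRun_cons_of_le _ _ (by simp; omega), rowRun_cons_of_le _ _ (by simp; omega)]
        have := ih hys
        exact ⟨by simp [this.1], this.2.imp id fun h => ⟨by simp, h.2⟩⟩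
      have g1 : a < y := by omega
      have g2 : ¬ c < a := by omega
      have g3 : ¬ b < a := by omega
      have g4 : a < c := by omega
      by_cases hcy : c < y
      · cases ys with
        | nil => simp [Plactic.rowRun, rowInsert, *]
        | cons y' ys =>
          have hyy : y ≤ y' := hy (by simp)
          have g5 : c < y' := by omega
          have g6 : b < y' := by omega
          simp [Plactic.rowRun, rowInsert, *]
          exact .inr (.inr (KTriple.k2 c y y' hcy hyy))
      · obtain ⟨p, hp, hpc⟩ := rowInsert_bump_of_lt b c h2 ys hys
        have hpm := rowInsert_bumped b (rowInsert c ys).1 p (by simp [hp])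
        have hyp : y ≤ p := by
          rcases rowInsert_mem c ys p hpm.2 with h | h
          · omega
          · exact hy h
        cases ho : (rowInsert c ys).2 with
        | none => simp [Plactic.rowRun, rowInsert, *]
        | some o =>
          have hco := (rowInsert_bumped c ys o (by simp [ho])).1
          simp [Plactic.rowRun, rowInsert, *]
          exact .inr (.inl (KTriple.k1 y p o hyp (by omega)))
    | k2 a b c h1 h2 =>
      by_cases hya : y ≤ a
      · rw [rowRun_cons_of_le _ _ (by simp; omega), rowRun_cons_of_le _ _ (by simp; omega)]
        have := ih hys
        exact ⟨by simp [this.1], this.2.imp id fun h => ⟨by simp, h.2⟩⟩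
      have g1 : a < y := by omega
      have g2 : ¬ c < a := by omega
      have g3 : ¬ c < b := by omega
      by_cases hby : b < y
      · cases ho : (rowInsert c ys).2 with
        | none => simp [Plactic.rowRun, rowInsert, *]
        | some o =>
          have hyo : y ≤ o := hy (rowInsert_bumped c ys o (by simp [ho])).2
          simp [Plactic.rowRun, rowInsert, *]
          exact .inr (.inl (KTriple.k2 b y o hby hyo))
      · have g4 : ¬ c < y := by omega
        cases ho : (rowInsert c (rowInsert b ys).1).2 with
        | none => simp [Plactic.rowRun, rowInsert, *]
        | some o =>
          obtain ⟨p, hp, hpo⟩ := rowInsert_bump_of_le b c h2 ys hys o ho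
          have hbp := (rowInsert_bumped b ys p (by simp [hp])).1
          simp [Plactic.rowRun, rowInsert, *]
          exact .inr (.inl (KTriple.k2 y p o (by omega) hpo))

/-- All rows of a tableau are weakly increasing. -/
def RowsSorted (T : List (List ℕ)) : Prop := ∀ r ∈ T, r.Pairwise (· ≤ ·)

theorem tInsert_rowsSorted (T : List (List ℕ)) : ∀ x, RowsSorted T → RowsSorted (tInsert x T) := by
  induction T with
  | nil => intro x _ r hr; simp [tInsert] at hr; simp [hr]
  | cons s T ih =>
    intro x h
    simp only [RowsSorted, List.mem_cons, forall_eq_or_imp] at h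
    rw [tInsert_cons]
    simp only [RowsSorted, List.mem_cons, forall_eq_or_imp]
    refine ⟨rowInsert_sorted x s h.1, ?_⟩
    cases (rowInsert x s).2 with
    | none => exact h.2
    | some y => exact ih y h.2

theorem insertWord_rowsSorted (w : List ℕ) : ∀ T, RowsSorted T → RowsSorted (insertWord T w) := by
  induction w with
  | nil => intro T h; exact h
  | cons x w ih => intro T h; exact ih _ (tInsert_rowsSorted T x h)

theorem KTriple.insertWord_eq (T : List (List ℕ)) : ∀ {u v : List ℕ}, KTriple u v →
    RowsSorted T → insertWord T u = insertWord T v := by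
  induction T with
  | nil =>
    intro u v h _
    rw [insertWord_nil u (by cases h <;> simp), insertWord_nil v (by cases h <;> simp),
      insertWord_cons, insertWord_cons]
    have := h.rowRun [] .nil
    simp only [ne_eq, not_true_eq_false, false_and, or_false] at this
    rw [this.1, this.2]
  | cons r T ih =>
    intro u v h hT
    simp only [RowsSorted, List.mem_cons, forall_eq_or_imp] at hT
    rw [insertWord_cons, insertWord_cons]
    obtain ⟨h1, h2 | ⟨-, h2 | h2⟩⟩ := h.rowRun r hT.1
    · rw [h1, h2]
    · rw [h1, ih h2 hT.2]
    · rw [h1, ih h2 hT.2]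

theorem KTriple.P_eq {u v : List ℕ} (h : KTriple u v) (x y : List ℕ) :
    P (x ++ u ++ y) = P (x ++ v ++ y) := by
  have hx : RowsSorted (insertWord [] x) := insertWord_rowsSorted x [] (by simp [RowsSorted])
  change insertWord [] _ = insertWord [] _
  rw [insertWord_append, insertWord_append, insertWord_append, insertWord_append,
    h.insertWord_eq _ hx]

/-- Knuth-equivalent words have the same insertion tableau. -/
theorem KEquiv.P_eq {u v : List ℕ} (h : KEquiv u v) : P u = P v := by
  induction h with
  | rel _ _ h =>
    cases h with
    | k1 x y a b c h1 h2 => exact (KTriple.k1 a b c h1 h2).P_eq x y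
    | k2 x y a b c h1 h2 => exact (KTriple.k2 a b c h1 h2).P_eq x y
  | refl _ => rfl
  | symm _ _ _ ih => exact ih.symm
  | trans _ _ _ _ _ ih1 ih2 => exact ih1.trans ih2

/-! ### The insertion tableau of a row reading word -/

/-- Drop everything from the first empty row on. -/
def trim : List (List ℕ) → List (List ℕ)
  | [] => []
  | [] :: _ => []
  | (a :: s) :: S => (a :: s) :: trim S

theorem rowInsert_append (x : ℕ) (pre s : List ℕ) (h : ∀ y ∈ pre, y ≤ x) :
    rowInsert x (pre ++ s) = (pre ++ (rowInsert x s).1, (rowInsert x s).2) := by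
  induction pre with
  | nil => rfl
  | cons a pre ih =>
    simp only [List.mem_cons, forall_eq_or_imp] at h
    simp [rowInsert, Nat.not_lt.2 h.1, ih h.2]

theorem rowRun_append_of_dom (r : List ℕ) : ∀ (pre s : List ℕ), (pre ++ r).Pairwise (· ≤ ·) →
    Dom r s → rowRun (pre ++ s) r = (pre ++ r, s) := by
  induction r with
  | nil =>
    intro pre s _ h
    cases s with
    | nil => rfl
    | cons => exact h.elim
  | cons a r ih =>
    intro pre s hp h
    have hpre : ∀ y ∈ pre, y ≤ a := by
      simp [List.pairwise_append] at hp; grind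
    have hp' : ((pre ++ [a]) ++ r).Pairwise (· ≤ ·) := by simpa using hp
    rw [rowRun, rowInsert_append _ _ _ hpre]
    cases s with
    | nil =>
      have := ih (pre ++ [a]) [] hp' (dom_nil r)
      simp at this
      simp [rowInsert, this]
    | cons e s =>
      have := ih (pre ++ [a]) s hp' h.2
      simp at this
      simp [rowInsert, h.1, this]

theorem insertWord_trim (S : List (List ℕ)) : ∀ s, SSYT (s :: S) →
    insertWord (trim S) s = trim (s :: S) := by
  have single : ∀ s : List ℕ, s.Pairwise (· ≤ ·) → s ≠ [] → insertWord [] s = [s] := by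
    intro s hs hne
    have := rowRun_append_of_dom s [] [] hs (dom_nil s)
    simp at this
    rw [insertWord_nil s hne, insertWord_cons, this]
    rfl
  induction S with
  | nil =>
    intro s h
    cases s with
    | nil => rfl
    | cons a s => exact single _ h.1 (by simp)
  | cons s' S ih =>
    intro s h
    obtain ⟨hs, hd, hS⟩ := h
    have hrun := rowRun_append_of_dom s [] s' hs hd
    cases s with
    | nil =>
      cases s' with
      | nil => rfl
      | cons => exact hd.elim
    | cons a s =>
      cases s' with
      | nil => exact single _ hs (by simp)
      | cons a' s' =>
        have := ih _ hS
        simp at hrun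
        simp only [trim] at this ⊢
        rw [insertWord_cons, hrun, this]

theorem P_rowReading (T : List (List ℕ)) (hT : SSYT T) : P (rowReading T) = trim T := by
  induction T with
  | nil => rfl
  | cons s S ih =>
    have h := ih hT.2.2
    change insertWord [] _ = _ at h
    change insertWord [] _ = _
    rw [rowReading, insertWord_append, h, insertWord_trim S s hT]

theorem countTop_eq_zero_of_nil_cons (b : ℕ) (S : List (List ℕ)) : SSYT ([] :: S) →
    ∀ k, countTop b k S = 0 := by
  induction S with
  | nil => rintro - (_ | k) <;> rfl
  | cons s S ih =>
    rintro ⟨-, hd, hS⟩ (_ | k)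
    · rfl
    · cases s with
      | nil => simp [countTop, ih hS]
      | cons => exact hd.elim

theorem countTop_trim (b : ℕ) (T : List (List ℕ)) : SSYT T → ∀ k,
    countTop b k (trim T) = countTop b k T := by
  induction T with
  | nil => intro _ k; rfl
  | cons s S ih =>
    rintro h (_ | k)
    · rfl
    · cases s with
      | nil => simp [trim, countTop, countTop_eq_zero_of_nil_cons b S h]
      | cons => simp [trim, countTop, ih h.2.2]

/-! ### Comparison of `P w` with `P (u ++ w)` and `P (w ++ u)` -/

theorem countTop_le_append_left (u w : List ℕ) (b k : ℕ) :
    countTop b k (P w) ≤ countTop b k (P (u ++ w)) := by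
  obtain ⟨T, hT, hK, -⟩ := exists_ssyt_append w [] trivial
  simp only [rowReading, List.append_nil] at hK
  obtain ⟨T', hT', hK', hc⟩ := exists_ssyt_append u T hT
  rw [hK.P_eq, ((hK.append_left u).trans hK').P_eq, P_rowReading T hT, P_rowReading T' hT',
    countTop_trim b T hT, countTop_trim b T' hT']
  exact hc b k

theorem countTop_tInsert_le (b : ℕ) (T : List (List ℕ)) : ∀ x k,
    countTop b k (tInsert x T) ≤ countTop b k T + [x].count b := by
  induction T with
  | nil => rintro x (_ | _ | k) <;> simp [tInsert, countTop]
  | cons r T ih =>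
    rintro x (_ | k)
    · simp [countTop]
    · have hc := rowInsert_count b x r
      rw [tInsert_cons]
      simp only [countTop]
      cases ho : (rowInsert x r).2 with
      | none =>
        simp only [ho, Option.toList_none, List.count_nil] at hc
        simp only [Option.toList_none, insertWord, List.foldl_nil]
        omega
      | some y =>
        have := ih y k
        simp only [ho, Option.toList_some] at hc
        simp only [Option.toList_some, insertWord, List.foldl_cons, List.foldl_nil]
        omega

theorem countTop_insertWord_le (b : ℕ) (u : List ℕ) (hb : b ∉ u) (k : ℕ) : ∀ T,
    countTop b k (insertWord T u) ≤ countTop b k T := by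
  induction u with
  | nil => intro T; exact le_rfl
  | cons x u ih =>
    intro T
    simp only [List.mem_cons, not_or] at hb
    have h1 := ih hb.2 (tInsert x T)
    have h2 := countTop_tInsert_le b T x k
    rw [List.count_singleton, if_neg (by simpa using Ne.symm hb.1)] at h2
    exact h1.trans h2

theorem countTop_succ (b : ℕ) (T : List (List ℕ)) : ∀ i,
    countTop b (i + 1) T = countTop b i T + (T.getD i []).count b := by
  induction T with
  | nil => rintro (_ | i) <;> simp [countTop]
  | cons r T ih =>
    rintro (_ | i)
    · simp [countTop]
    · have := ih i
      simp only [countTop, List.getD_cons_succ] at this ⊢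
      omega

end Plactic

open Plactic in
theorem stmt_1 (u w : List ℕ) (hu : ∀ x ∈ u, 0 < x) (hw : ∀ x ∈ w, 0 < x)
    (hcent : w ∈ Cent u) (b : ℕ) (hb : 0 < b) (hbu : b ∉ u) (i : ℕ) :
    (row (w ++ u) i).count b = (row w i).count b ∧
    (row w i).count b = (row (u ++ w) i).count b := by
  have hP : P (u ++ w) = P (w ++ u) := KEquiv.P_eq hcent
  have key : ∀ k, countTop b k (P (w ++ u)) = countTop b k (P w) := by
    intro k
    have h1 := countTop_le_append_left u w b k
    have h2 : countTop b k (P (w ++ u)) ≤ countTop b k (P w) := by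
      have := countTop_insertWord_le b u hbu k (insertWord [] w)
      rwa [← insertWord_append] at this
    rw [hP] at h1
    omega
  have h : (row (w ++ u) i).count b = (row w i).count b := by
    have h1 := countTop_succ b (P (w ++ u)) i
    have h2 := countTop_succ b (P w) i
    rw [key, key] at h1
    unfold row
    omega
  exact ⟨h, by rw [← h, row, row, hP]⟩
end
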